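/- Existence of collar parameters (tree version of the paper's Lemma 6.2): fix a tree shape T all of whose internal vertices have at least two children, and fix an assignment of a normalized injective configuration to every internal vertex of T. Then there exists ε > 0 such that for every assignment of scales with 0 < t_v < ε at each non-root internal vertex v, the output tuple ω(T) of the resulting decoration is injective. -/

import Mathlib

/-!
Fix a bound `R` for all the entries produced by the subtrees when the scales are at most `1`. A
subtree attached with scale `t < ε` then contributes points `z i + t • x` with `‖t • x‖ ≤ ε * R`, so
as `ε → 0` its cluster collapses onto the point `z i`. The points `z i` are distinct, hence have
pairwise disjoint neighbourhoods, which for small `ε` contain the respective clusters; within a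
cluster, injectivity is inherited from the subtree because `x ↦ z i + t • x` is injective.
-/

/-- Decorated planar rooted trees: a tree is either a leaf, or an internal
vertex decorated by a scale `t` and a configuration `z : Fin k → ℝ^m`, with a
family of `k` children. The scale at the root is never used. -/
inductive DTree (m : ℕ) : Type
  | leaf : DTree m
  | node (k : ℕ) (t : ℝ) (z : Fin k → EuclideanSpace ℝ (Fin m))
      (children : Fin k → DTree m) : DTree m

namespace DTree

/-- The effective scale of a subtree: the scale at its root vertex, with the
convention that the scale of a leaf is `1`. -/
def scaleOf {m : ℕ} : DTree m → ℝ
  | leaf => 1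
  | node _ t _ _ => t

/-- The output tuple `ω(T)` (as a list indexed by the leaves of `T`):
`ω(leaf)` is the single point `0`, and at an internal vertex with
configuration `z` and children `T₁, …, T_k`, `ω` is the concatenation over
`i` of the tuples with entries `z i + t_i • (entry of ω(T_i))`, where `t_i`
is the effective scale of `T_i`. -/
noncomputable def omega {m : ℕ} : DTree m → List (EuclideanSpace ℝ (Fin m))
  | leaf => [0]
  | node k _ z c =>
      (List.ofFn fun i : Fin k =>
        (omega (c i)).map fun x => z i + scaleOf (c i) • x).flatten

/-- A tree is reduced if every internal vertex has at least two children. -/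
def Reduced {m : ℕ} : DTree m → Prop
  | leaf => True
  | node k _ _ c => 2 ≤ k ∧ ∀ i, Reduced (c i)

/-- Every internal vertex carries an injective normalized configuration. -/
def GoodConfigs {m : ℕ} : DTree m → Prop
  | leaf => True
  | node _ _ z c => Function.Injective z ∧ (∑ i, z i) = 0 ∧
      (∑ i, ‖z i‖ ^ 2) = 1 ∧ ∀ i, GoodConfigs (c i)

/-- Two decorated trees are decorations of the same tree shape with the same
configuration at every internal vertex (only the scales may differ). -/
inductive SameConfigs {m : ℕ} : DTree m → DTree m → Prop
  | leaf : SameConfigs leaf leaf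
  | node {k : ℕ} {t₁ t₂ : ℝ} {z : Fin k → EuclideanSpace ℝ (Fin m)}
      {c₁ c₂ : Fin k → DTree m} (h : ∀ i, SameConfigs (c₁ i) (c₂ i)) :
      SameConfigs (node k t₁ z c₁) (node k t₂ z c₂)

/-- The scales at all internal vertices (including the root) lie in `(0, ε)`. -/
def ScalesIn {m : ℕ} (ε : ℝ) : DTree m → Prop
  | leaf => True
  | node _ t _ c => 0 < t ∧ t < ε ∧ ∀ i, ScalesIn ε (c i)

/-- The scales at all non-root internal vertices lie in `(0, ε)`. -/
def NonRootScalesIn {m : ℕ} (ε : ℝ) : DTree m → Prop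
  | leaf => True
  | node _ _ _ c => ∀ i, ScalesIn ε (c i)

open Filter Function Topology

/-- Every internal vertex carries an injective configuration of arbitrary barycentre and size: the
weakening of `GoodConfigs` under which the entries of `ω` separate for small scales. -/
def InjectiveConfigs {m : ℕ} : DTree m → Prop
  | leaf => True
  | node _ _ z c => Injective z ∧ ∀ i, InjectiveConfigs (c i)

theorem nodup_flatten_ofFn {α : Type*} {k : ℕ} {L : Fin k → List α} {U : Fin k → Set α}
    (hL : ∀ i, (L i).Nodup) (hU : Pairwise (Disjoint on U)) (hLU : ∀ i, ∀ x ∈ L i, x ∈ U i) :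
    (List.ofFn L).flatten.Nodup := by
  refine List.nodup_flatten.2 ⟨List.forall_mem_ofFn_iff.2 hL, List.pairwise_ofFn.2 ?_⟩
  intro i j hij x hxi hxj
  exact (hU hij.ne).notMem_of_mem_left (hLU i x hxi) (hLU j x hxj)

section

variable {m : ℕ} {ε : ℝ} {T : DTree m}

theorem GoodConfigs.injectiveConfigs (h : GoodConfigs T) : InjectiveConfigs T := by
  induction T with
  | leaf => trivial
  | node k t z c ih => exact ⟨h.1, fun i => ih i (h.2.2.2 i)⟩

theorem ScalesIn.nonRootScalesIn (h : ScalesIn ε T) : NonRootScalesIn ε T := by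
  cases T with
  | leaf => trivial
  | node k t z c => exact h.2.2

theorem ScalesIn.scaleOf_pos (h : ScalesIn ε T) : 0 < scaleOf T := by
  cases T with
  | leaf => exact one_pos
  | node k t z c => exact h.1

theorem mem_omega_leaf {x : EuclideanSpace ℝ (Fin m)} : x ∈ omega (leaf : DTree m) ↔ x = 0 := by
  rw [omega, List.mem_singleton]

theorem mem_omega_node {k : ℕ} {t : ℝ} {z : Fin k → EuclideanSpace ℝ (Fin m)}
    {c : Fin k → DTree m} {x : EuclideanSpace ℝ (Fin m)} :
    x ∈ omega (node k t z c) ↔ ∃ i, ∃ y ∈ omega (c i), z i + scaleOf (c i) • y = x := by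
  simp only [omega, List.mem_flatten, List.mem_ofFn, exists_exists_eq_and, List.mem_map]

theorem nodup_omega_node {k : ℕ} {t : ℝ} {z : Fin k → EuclideanSpace ℝ (Fin m)}
    {c : Fin k → DTree m} {U : Fin k → Set (EuclideanSpace ℝ (Fin m))}
    (hscale : ∀ i, scaleOf (c i) ≠ 0) (hnodup : ∀ i, (omega (c i)).Nodup)
    (hU : Pairwise (Disjoint on U))
    (hmem : ∀ i, ∀ x ∈ omega (c i), z i + scaleOf (c i) • x ∈ U i) :
    (omega (node k t z c)).Nodup := by
  rw [omega]
  refine nodup_flatten_ofFn (fun i => ?_) hU fun i => List.forall_mem_map.2 (hmem i)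
  exact (hnodup i).map ((add_right_injective (z i)).comp (smul_right_injective _ (hscale i)))

theorem ScalesIn.norm_scaleOf_smul_le (h : ScalesIn ε T)
    {x : EuclideanSpace ℝ (Fin m)} (hx : x ∈ omega T) : ‖scaleOf T • x‖ ≤ ε * ‖x‖ := by
  cases T with
  | leaf =>
    -- The scale `1` of a leaf is not small, but its only entry is `0`.
    obtain rfl := mem_omega_leaf.1 hx
    simp only [smul_zero, norm_zero, mul_zero, le_refl]
  | node k t z c =>
    obtain ⟨ht, htε, -⟩ := h
    rw [scaleOf, norm_smul, Real.norm_of_nonneg ht.le]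
    gcongr

theorem exists_norm_le_of_mem_omega (T : DTree m) :
    ∃ R : ℝ, ∀ ε ≤ (1 : ℝ), ∀ T' : DTree m, SameConfigs T T' →
      NonRootScalesIn ε T' → ∀ x ∈ omega T', ‖x‖ ≤ R := by
  induction T with
  | leaf =>
    refine ⟨0, fun ε _ T' hT _ x hx => ?_⟩
    cases hT
    obtain rfl := mem_omega_leaf.1 hx
    exact norm_zero.le
  | node k t z c ih =>
    choose R hR using ih
    obtain ⟨M, hM⟩ := Finite.exists_le fun i => ‖z i‖ + R i
    refine ⟨M, fun ε hε T' hT hS x hx => ?_⟩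
    cases hT with
    | @node _ _ _ _ _ c' hc =>
    obtain ⟨i, y, hy, rfl⟩ := mem_omega_node.1 hx
    have hSi : ScalesIn ε (c' i) := hS i
    calc ‖z i + scaleOf (c' i) • y‖
        ≤ ‖z i‖ + ‖scaleOf (c' i) • y‖ := norm_add_le _ _
      _ ≤ ‖z i‖ + ε * ‖y‖ := by gcongr; exact hSi.norm_scaleOf_smul_le hy
      _ ≤ ‖z i‖ + ‖y‖ := by gcongr; exact mul_le_of_le_one_left (norm_nonneg y) hε
      _ ≤ ‖z i‖ + R i := by gcongr; exact hR i ε hε (c' i) (hc i) hSi.nonRootScalesIn y hy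
      _ ≤ M := hM i

theorem eventually_scaleOf_smul_mem (T : DTree m) {U : Set (EuclideanSpace ℝ (Fin m))}
    (hU : U ∈ 𝓝 0) :
    ∀ᶠ ε in 𝓝[>] (0 : ℝ), ∀ T' : DTree m, SameConfigs T T' → ScalesIn ε T' →
      ∀ x ∈ omega T', scaleOf T' • x ∈ U := by
  obtain ⟨R, hR⟩ := exists_norm_le_of_mem_omega T
  have hlim : Tendsto (fun ε : ℝ => ε * R) (𝓝[>] 0) (𝓝 0) :=
    ((continuous_mul_const R).tendsto' 0 0 (zero_mul R)).mono_left nhdsWithin_le_nhds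
  have hball : ∀ᶠ ε in 𝓝[>] (0 : ℝ), Metric.closedBall 0 (ε * R) ⊆ U :=
    hlim.eventually (eventually_closedBall_subset hU)
  filter_upwards [hball, Ioc_mem_nhdsGT one_pos] with ε hεU hε T' hT hS x hx
  refine hεU (mem_closedBall_zero_iff.2 ?_)
  calc ‖scaleOf T' • x‖
      ≤ ε * ‖x‖ := hS.norm_scaleOf_smul_le hx
    _ ≤ ε * R := mul_le_mul_of_nonneg_left
        (hR ε hε.2 T' hT hS.nonRootScalesIn x hx) hε.1.le

theorem eventually_nodup_omega (h : InjectiveConfigs T) :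
    ∀ᶠ ε in 𝓝[>] (0 : ℝ), ∀ T' : DTree m, SameConfigs T T' →
      NonRootScalesIn ε T' → (omega T').Nodup := by
  induction T with
  | leaf =>
    refine Eventually.of_forall fun ε T' hT _ => ?_
    cases hT
    exact List.nodup_singleton 0
  | node k t z c ih =>
    obtain ⟨hz, hc⟩ := h
    obtain ⟨U, hUz, hU⟩ :=
      (pairwise_disjoint_nhds.comp_of_injective hz).exists_mem_filter_of_disjoint
    have hcluster : ∀ᶠ ε in 𝓝[>] (0 : ℝ), ∀ i, ∀ T' : DTree m, SameConfigs (c i) T' →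
        ScalesIn ε T' → ∀ x ∈ omega T', z i + scaleOf T' • x ∈ U i :=
      eventually_all.2 fun i => eventually_scaleOf_smul_mem (c i)
        ((continuous_const_add (z i)).tendsto' 0 (z i) (add_zero _) (hUz i))
    have hchildren : ∀ᶠ ε in 𝓝[>] (0 : ℝ), ∀ i, ∀ T' : DTree m, SameConfigs (c i) T' →
        NonRootScalesIn ε T' → (omega T').Nodup :=
      eventually_all.2 fun i => ih i (hc i)
    filter_upwards [hcluster, hchildren] with ε hmem hnodup T' hT hS
    cases hT with
    | @node _ _ _ _ _ c' hsame =>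
    have hS : ∀ i, ScalesIn ε (c' i) := hS
    exact nodup_omega_node (fun i => (hS i).scaleOf_pos.ne')
      (fun i => hnodup i (c' i) (hsame i) (hS i).nonRootScalesIn) hU
      fun i => hmem i (c' i) (hsame i) (hS i)

theorem exists_collar_eps_general (T : DTree m) (h : InjectiveConfigs T) :
    ∃ ε > (0 : ℝ), ∀ T' : DTree m, SameConfigs T T' →
      NonRootScalesIn ε T' → (omega T').Nodup := by
  obtain ⟨ε, hnodup, hε⟩ := ((eventually_nodup_omega h).and self_mem_nhdsWithin).exists
  exact ⟨ε, hε, hnodup⟩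

end

/-- Existence of collar parameters (tree version of the paper's Lemma 6.2):
given a reduced tree shape decorated by normalized injective configurations,
there is an `ε > 0` such that for every choice of scales in `(0, ε)` at the
non-root internal vertices, the output tuple `ω` has pairwise distinct
entries. -/
theorem exists_collar_eps {m : ℕ} (T : DTree m)
    (hred : Reduced T) (hcfg : GoodConfigs T) :
    ∃ ε > (0 : ℝ), ∀ T' : DTree m, SameConfigs T T' →
      NonRootScalesIn ε T' → (omega T').Nodup := by
  exact exists_collar_eps_general T hcfg.injectiveConfigs

end DTree
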